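/- arXiv:2505.07024 — 2 statements merged into one kernel-verified Lean document; each statement's English description precedes it below -/
import Mathlib

section
/- For 0 < a < 1 and m > 0, the Kilbas–Saigo function satisfies the two-sided bound 1/(1+Γ(1−a)x) ≤ E_{a,m,m−1}(−x) ≤ 1/(1 + (Γ(1+a(m−1))/Γ(1+am))·x) for all x ≥ 0. In particular 0 < E_{a,m,m−1}(−x) ≤ 1. -/
open Real Finset

open MeasureTheory in
lemma ks_beta {u v : ℝ} (hu : 0 < u) (hv : 0 < v) :
    IntegrableOn (fun s : ℝ => s ^ (u - 1) * (1 - s) ^ (v - 1)) (Set.Ioo 0 1) ∧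
    ∫ s in Set.Ioo (0:ℝ) 1, s ^ (u - 1) * (1 - s) ^ (v - 1)
      = Real.Gamma u * Real.Gamma v / Real.Gamma (u + v) := by
  have hc := Complex.betaIntegral_convergent (u := (u:ℂ)) (v := (v:ℂ)) (by simpa) (by simpa)
  rw [intervalIntegrable_iff_integrableOn_Ioo_of_le zero_le_one] at hc
  have heq : Set.EqOn (fun x : ℝ => (x : ℂ) ^ ((u:ℂ) - 1) * (1 - (x : ℂ)) ^ ((v:ℂ) - 1))
      (fun s : ℝ => ((s ^ (u - 1) * (1 - s) ^ (v - 1) : ℝ) : ℂ)) (Set.Ioo 0 1) := by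
    intro s hs
    have h1 : 0 ≤ 1 - s := by linarith [hs.2]
    simp only [Complex.ofReal_mul, Complex.ofReal_cpow hs.1.le, Complex.ofReal_cpow h1]
    push_cast
    rfl
  have hc2 := hc.congr_fun heq measurableSet_Ioo
  constructor
  · have := hc2.re
    simpa [IntegrableOn] using this
  · have h2 := Complex.betaIntegral_eq_Gamma_mul_div (u:ℂ) (v:ℂ) (by simpa) (by simpa)
    rw [Complex.betaIntegral, intervalIntegral.integral_of_le zero_le_one,
      integral_Ioc_eq_integral_Ioo, setIntegral_congr_fun measurableSet_Ioo heq,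
      integral_complex_ofReal, ← Complex.ofReal_add, Complex.Gamma_ofReal, Complex.Gamma_ofReal,
      Complex.Gamma_ofReal] at h2
    exact_mod_cast h2

lemma ks_bern {p s : ℝ} (hp : 0 ≤ p) (hs0 : 0 ≤ s) (hs1 : s ≤ 1) :
    0 ≤ 1 - s ^ p ∧ 1 - s ^ p ≤ (max 1 p) * (1 - s) := by
  refine ⟨by linarith [Real.rpow_le_one hs0 hs1 hp], ?_⟩
  rcases le_total 1 p with h | h
  · have := one_add_mul_self_le_rpow_one_add (s := s - 1) (by linarith) h
    rw [max_eq_right h]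
    simp only [add_sub_cancel] at this
    linarith
  · rw [max_eq_left h]
    have := Real.rpow_le_rpow_of_exponent_ge_of_imp hs0 hs1 h (by intro _ h; linarith)
    simp at this
    linarith

open MeasureTheory in
lemma ks_marchaud {a p : ℝ} (ha0 : 0 < a) (ha1 : a < 1) (hp : 0 ≤ p) :
    IntegrableOn (fun s : ℝ => (1 - s ^ p) * (1 - s) ^ (-a - 1)) (Set.Ioo 0 1) ∧
    a * ∫ s in Set.Ioo (0:ℝ) 1, (1 - s ^ p) * (1 - s) ^ (-a - 1)
      = Real.Gamma (1 - a) * Real.Gamma (1 + p) / Real.Gamma (1 + p - a) - 1 := by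
  rcases hp.eq_or_lt with rfl | hp
  · have : Real.Gamma (1 - a) ≠ 0 := (Real.Gamma_pos_of_pos (by linarith)).ne'
    simp [this]
  have hint : IntegrableOn (fun s : ℝ => (1 - s ^ p) * (1 - s) ^ (-a - 1)) (Set.Ioo 0 1) := by
    have h0 := (ks_beta (u := 1) (v := 1 - a) one_pos (by linarith)).1.const_mul (max 1 p)
    refine h0.mono' ?_ ?_
    · apply Measurable.aestronglyMeasurable
      fun_prop
    · refine (ae_restrict_mem measurableSet_Ioo).mono ?_
      intro s hs
      have h1 : 0 < 1 - s := by linarith [hs.2]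
      have hb := ks_bern hp.le hs.1.le hs.2.le
      have hpos := Real.rpow_pos_of_pos h1 (-a - 1)
      rw [Real.norm_of_nonneg (mul_nonneg hb.1 hpos.le)]
      calc (1 - s ^ p) * (1 - s) ^ (-a - 1) ≤ (max 1 p * (1 - s)) * (1 - s) ^ (-a - 1) := by
            gcongr; exact hb.2
        _ = _ := by
            simp only [sub_self, Real.rpow_zero, one_mul]
            rw [mul_assoc]
            congr 1
            rw [show (1 - a - 1) = 1 + (-a - 1) by ring, Real.rpow_add h1, Real.rpow_one]
  refine ⟨hint, ?_⟩
  obtain ⟨hB1, hB2⟩ := ks_beta (u := p) (v := 1 - a) hp (by linarith)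
  have hcont : ContinuousOn (fun s : ℝ => (1 - s ^ p) * (1 - s) ^ (-a)) (Set.Icc 0 1) := by
    intro s hs
    rcases hs.2.eq_or_lt with rfl | h
    · unfold ContinuousWithinAt
      have hlim : Filter.Tendsto (fun s : ℝ => max 1 p * (1 - s) ^ (1 - a))
          (nhdsWithin 1 (Set.Icc 0 1)) (nhds 0) := by
        have : ContinuousAt (fun s : ℝ => max 1 p * (1 - s) ^ (1 - a)) 1 := by
          refine continuousAt_const.mul (ContinuousAt.rpow_const (by fun_prop) (Or.inr (by linarith)))
        have h2 := this.tendsto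
        simp only [sub_self] at h2
        rw [Real.zero_rpow (by linarith), mul_zero] at h2
        exact h2.mono_left nhdsWithin_le_nhds
      simp only [Real.one_rpow, sub_self, zero_mul]
      refine tendsto_of_tendsto_of_tendsto_of_le_of_le' tendsto_const_nhds hlim ?_ ?_
      · filter_upwards [self_mem_nhdsWithin] with t ht
        exact mul_nonneg (ks_bern hp.le ht.1 ht.2).1 (Real.rpow_nonneg (by linarith [ht.2]) _)
      · filter_upwards [self_mem_nhdsWithin] with t ht
        rcases ht.2.eq_or_lt with rfl | h
        · simp
          exact Real.rpow_nonneg le_rfl _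
        · have h1 : 0 < 1 - t := by linarith
          have := Real.rpow_pos_of_pos h1 (-a)
          calc (1 - t ^ p) * (1 - t) ^ (-a) ≤ (max 1 p * (1 - t)) * (1 - t) ^ (-a) := by
                gcongr; exact (ks_bern hp.le ht.1 ht.2).2
            _ = _ := by
                rw [mul_assoc]
                congr 1
                rw [sub_eq_add_neg 1 a, Real.rpow_add h1, Real.rpow_one]
    · apply ContinuousAt.continuousWithinAt
      refine ContinuousAt.mul ?_ ?_
      · exact continuousAt_const.sub (continuousAt_id.rpow_const (Or.inr hp.le))
      · exact ContinuousAt.rpow_const (by fun_prop) (Or.inl (by linarith))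
  have hftc := intervalIntegral.integral_eq_sub_of_hasDerivAt_of_le (zero_le_one) hcont
    (f' := fun s => a * ((1 - s ^ p) * (1 - s) ^ (-a - 1)) - p * (s ^ (p - 1) * (1 - s) ^ (1 - a - 1)))
    (by
      intro s hs
      have h1 : 0 < 1 - s := by linarith [hs.2]
      have e1 : HasDerivAt (fun s : ℝ => 1 - s ^ p) (-(p * s ^ (p - 1))) s :=
        (Real.hasDerivAt_rpow_const (Or.inl hs.1.ne')).const_sub 1
      have e2 : HasDerivAt (fun s : ℝ => (1 - s) ^ (-a)) ((-1) * (-a) * (1 - s) ^ (-a - 1)) s :=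
        ((hasDerivAt_id s).const_sub 1).rpow_const (Or.inl h1.ne')
      convert! e1.mul e2 using 1
      rw [show 1 - a - 1 = -a by ring]
      ring)
    (by
      rw [intervalIntegrable_iff_integrableOn_Ioo_of_le zero_le_one]
      exact (hint.const_mul a).sub (hB1.const_mul p))
  rw [intervalIntegral.integral_of_le zero_le_one, integral_Ioc_eq_integral_Ioo,
    integral_sub (hint.const_mul a) (hB1.const_mul p), integral_const_mul, integral_const_mul,
    hB2] at hftc
  simp [Real.zero_rpow hp.ne'] at hftc
  rw [show 1 + p - a = p + (1 - a) by ring, add_comm 1 p, Real.Gamma_add_one hp.ne']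
  rw [sub_eq_iff_eq_add] at hftc
  rw [hftc]
  ring

open MeasureTheory in
/-- Termwise integration against a nonnegative kernel. -/
lemma ks_kernel {b : ℝ} (hb : 0 < b) (κ : ℝ → ℝ) (J : ℕ → ℝ) (d : ℕ → ℝ)
    (hκ : ∀ s ∈ Set.Ioo (0:ℝ) 1, 0 ≤ κ s)
    (hM : ∀ n : ℕ, IntegrableOn (fun s : ℝ => (1 - s ^ (b * n)) * κ s) (Set.Ioo 0 1))
    (hval : ∀ n : ℕ, ∫ s in Set.Ioo (0:ℝ) 1, (1 - s ^ (b * n)) * κ s = J n)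
    (hd : Summable d) (hsum1 : Summable (fun n => d n * J n))
    (hle : ∀ s ∈ Set.Ioo (0:ℝ) 1, ∑' n, d n * (s ^ b) ^ n ≤ ∑' n, d n) :
    0 ≤ ∑' n, d n * J n := by
  have hint : ∀ n : ℕ, Integrable (fun s : ℝ => d n * ((1 - s ^ (b * n)) * κ s))
      (volume.restrict (Set.Ioo 0 1)) := fun n => (hM n).const_mul (d n)
  have hnorm : ∀ n : ℕ, ∫ s in Set.Ioo (0:ℝ) 1, ‖d n * ((1 - s ^ (b * n)) * κ s)‖
      = |d n| * J n := by
    intro n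
    rw [← hval n, ← integral_const_mul]
    refine setIntegral_congr_fun measurableSet_Ioo ?_
    intro s hs
    have h2 := (ks_bern (p := b * n) (by positivity) hs.1.le hs.2.le).1
    simp only [norm_mul, Real.norm_eq_abs, abs_of_nonneg h2, abs_of_nonneg (hκ s hs)]
  have hqn : ∀ n, 0 ≤ J n := by
    intro n
    rw [← hval n]
    refine setIntegral_nonneg measurableSet_Ioo ?_
    intro s hs
    exact mul_nonneg (ks_bern (p := b * n) (by positivity) hs.1.le hs.2.le).1 (hκ s hs)
  have hS := hasSum_integral_of_summable_integral_norm hint (by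
    simp_rw [hnorm]
    refine hsum1.abs.congr ?_
    intro n
    rw [abs_mul, abs_of_nonneg (hqn n)])
  have hnn : 0 ≤ ∫ s in Set.Ioo (0:ℝ) 1, ∑' n : ℕ, d n * ((1 - s ^ (b * n)) * κ s) := by
    refine setIntegral_nonneg measurableSet_Ioo ?_
    intro s hs
    have hsb : 0 ≤ s ^ b := Real.rpow_nonneg hs.1.le _
    have hsb1 : s ^ b ≤ 1 := Real.rpow_le_one hs.1.le hs.2.le hb.le
    have hds : Summable (fun n => d n * (s ^ b) ^ n) := by
      refine Summable.of_norm_bounded hd.norm ?_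
      intro n
      rw [norm_mul, norm_pow, Real.norm_of_nonneg hsb]
      exact mul_le_of_le_one_right (norm_nonneg _) (pow_le_one₀ hsb hsb1)
    have : ∑' n : ℕ, d n * ((1 - s ^ (b * n)) * κ s)
        = (∑' n, d n - ∑' n, d n * (s ^ b) ^ n) * κ s := by
      rw [← hd.tsum_sub hds, ← tsum_mul_right]
      refine tsum_congr fun n => ?_
      rw [Real.rpow_mul hs.1.le, Real.rpow_natCast]
      ring
    simp only [this]
    exact mul_nonneg (by linarith [hle s hs]) (hκ s hs)
  rw [← hS.tsum_eq] at hnn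
  simpa only [integral_const_mul, hval] using hnn

/-- Extremum principle for the fractional derivative. -/
lemma ks_extremum {a b : ℝ} (ha0 : 0 < a) (ha1 : a < 1) (hb : 0 < b) (d : ℕ → ℝ) (A : ℝ)
    (hd : Summable d)
    (hq : HasSum (fun n : ℕ => d n *
      (Real.Gamma (1 - a) * Real.Gamma (1 + b * n) / Real.Gamma (1 + b * n - a))) A)
    (hle : ∀ s ∈ Set.Ioo (0:ℝ) 1, ∑' n, d n * (s ^ b) ^ n ≤ ∑' n, d n) :
    ∑' n, d n ≤ A := by
  set q : ℕ → ℝ := fun n => Real.Gamma (1 - a) * Real.Gamma (1 + b * n) / Real.Gamma (1 + b * n - a)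
    with hqdef
  have hM := fun n : ℕ => ks_marchaud ha0 ha1 (p := b * n) (by positivity)
  have hH : HasSum (fun n => d n * ((q n - 1) / a)) ((A - ∑' n, d n) / a) := by
    convert! (hq.sub hd.hasSum).div_const a using 2
    ring
  have hnn := ks_kernel hb (fun s => (1 - s) ^ (-a - 1)) (fun n => (q n - 1) / a) d
    (fun s hs => Real.rpow_nonneg (by linarith [hs.2]) _) (fun n => (hM n).1)
    (fun n => by
      rw [eq_div_iff ha0.ne', mul_comm]
      exact (hM n).2) hd hH.summable hle
  rw [hH.tsum_eq] at hnn
  have := mul_nonneg hnn ha0.le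
  rw [div_mul_cancel₀ _ ha0.ne'] at this
  linarith

noncomputable def ksC (a m : ℝ) (n : ℕ) : ℝ := ∏ k ∈ Finset.range n,
      Real.Gamma (1 + a * (k * m + (m - 1))) /
        Real.Gamma (1 + a * (k * m + (m - 1) + 1))

noncomputable def ksW (a m : ℝ) (n : ℕ) : ℝ :=
  Real.Gamma (1 + (a * m) * (n + 1) - a) / Real.Gamma (1 + (a * m) * (n + 1))

noncomputable def ksF (a m y : ℝ) : ℝ := ∑' n : ℕ, ksC a m n * (-y) ^ n

lemma ksC_succ (a m : ℝ) (n : ℕ) : ksC a m (n + 1) = ksC a m n * ksW a m n := by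
  unfold ksC ksW
  rw [Finset.prod_range_succ]
  congr 3 <;> ring

lemma ks_argpos {a m : ℝ} (ha0 : 0 < a) (ha1 : a < 1) (hm : 0 < m)
    (n : ℕ) : 0 < 1 + (a * m) * (n + 1) - a := by
  have : 0 < (a * m) * (n + 1) := by positivity
  linarith

lemma ksW_pos {a m : ℝ} (ha0 : 0 < a) (ha1 : a < 1) (hm : 0 < m)
    (n : ℕ) : 0 < ksW a m n :=
  div_pos (Real.Gamma_pos_of_pos (ks_argpos ha0 ha1 hm n)) (Real.Gamma_pos_of_pos (by positivity))

lemma ksC_pos {a m : ℝ} (ha0 : 0 < a) (ha1 : a < 1) (hm : 0 < m)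
    (n : ℕ) : 0 < ksC a m n := by
  induction n with
  | zero => simp [ksC]
  | succ n ih => rw [ksC_succ]; exact mul_pos ih (ksW_pos ha0 ha1 hm n)

lemma ksW_le {a m : ℝ} (ha0 : 0 < a) (ha1 : a < 1) (hm : 0 < m)
    (n : ℕ) : ksW a m n ≤ (1 + (a * m) * (n + 1)) ^ (-a) / (1 - a) := by
  have hs := ks_argpos ha0 ha1 hm n
  unfold ksW
  have hT1 : 1 ≤ 1 + (a * m) * (n + 1) := by
    have : 0 < (a * m) * (n + 1) := by positivity
    linarith
  set T := 1 + (a * m) * ((n:ℝ) + 1) with hT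
  have hT0 : 0 < T := by linarith
  have hG := Real.Gamma_pos_of_pos hT0
  have h := Real.Gamma_mul_add_mul_le_rpow_Gamma_mul_rpow_Gamma (s := T) (t := T + 1) (a := a)
    (b := 1 - a) hT0 (by linarith) ha0 (by linarith) (by ring)
  rw [show a * T + (1 - a) * (T + 1) = (T - a) + 1 by ring, Real.Gamma_add_one hs.ne',
    Real.Gamma_add_one hT0.ne', Real.mul_rpow hT0.le hG.le] at h
  have e : Real.Gamma T ^ a * (T ^ (1 - a) * Real.Gamma T ^ (1 - a)) = T * T ^ (-a) * Real.Gamma T := by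
    rw [show Real.Gamma T ^ a * (T ^ (1 - a) * Real.Gamma T ^ (1 - a))
      = T ^ (1 - a) * (Real.Gamma T ^ a * Real.Gamma T ^ (1 - a)) by ring, ← Real.rpow_add hG,
      sub_eq_add_neg 1 a, Real.rpow_add hT0]
    simp
  rw [e] at h
  have hG2 := Real.Gamma_pos_of_pos hs
  rw [div_le_div_iff₀ hG (by linarith)]
  have h2 : (1 - a) * T ≤ T - a := by nlinarith
  have h3 : (1 - a) * T * Real.Gamma (T - a) ≤ T * T ^ (-a) * Real.Gamma T :=
    le_trans (mul_le_mul_of_nonneg_right h2 hG2.le) h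
  have h4 : T * (Real.Gamma (T - a) * (1 - a)) ≤ T * (T ^ (-a) * Real.Gamma T) := by linarith
  exact le_of_mul_le_mul_left h4 hT0

lemma ksW_tendsto {a m : ℝ} (ha0 : 0 < a) (ha1 : a < 1) (hm : 0 < m)
    : Filter.Tendsto (ksW a m) Filter.atTop (nhds 0) := by
  have hb : 0 < a * m := by positivity
  have h1 : Filter.Tendsto (fun n : ℕ => 1 + (a * m) * ((n:ℝ) + 1)) Filter.atTop Filter.atTop := by
    apply Filter.tendsto_atTop_add_const_left
    apply Filter.Tendsto.const_mul_atTop hb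
    apply Filter.tendsto_atTop_add_const_right
    exact tendsto_natCast_atTop_atTop
  have h2 := ((tendsto_rpow_neg_atTop ha0).comp h1).div_const (1 - a)
  rw [zero_div] at h2
  exact squeeze_zero (fun n => (ksW_pos ha0 ha1 hm n).le) (ksW_le ha0 ha1 hm) h2

lemma ks_summable {a m : ℝ} (ha0 : 0 < a) (ha1 : a < 1) (hm : 0 < m)
    (y : ℝ) : Summable (fun n => ksC a m n * y ^ n) := by
  refine summable_of_ratio_norm_eventually_le (r := 1 / 2) (by norm_num) ?_
  have h := (ksW_tendsto ha0 ha1 hm).mul_const |y|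
  rw [zero_mul] at h
  filter_upwards [h.eventually_le_const (by norm_num : (0:ℝ) < 1 / 2)] with n hn
  rw [ksC_succ, pow_succ]
  simp only [norm_mul, Real.norm_eq_abs, abs_of_pos (ksW_pos ha0 ha1 hm n)]
  calc _ = (ksW a m n * |y|) * (|ksC a m n| * |y ^ n|) := by ring
    _ ≤ _ := by gcongr

lemma ksF_cont {a m : ℝ} (ha0 : 0 < a) (ha1 : a < 1) (hm : 0 < m)
    (Y : ℝ) : ContinuousOn (ksF a m) (Set.Icc 0 Y) := by
  refine continuousOn_tsum (u := fun n => ksC a m n * Y ^ n) ?_ (ks_summable ha0 ha1 hm Y) ?_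
  · intro n
    fun_prop
  · intro n y hy
    rw [norm_mul, norm_pow, norm_neg, Real.norm_of_nonneg hy.1,
      Real.norm_of_nonneg (ksC_pos ha0 ha1 hm n).le]
    have := (ksC_pos ha0 ha1 hm n).le
    have := hy.1
    gcongr
    exact hy.2

lemma ksF_tail {a m : ℝ} (ha0 : 0 < a) (ha1 : a < 1) (hm : 0 < m)
    (y : ℝ) : HasSum (fun n => ksC a m n * ksW a m n * (-y) ^ (n + 1)) (ksF a m y - 1) := by
  have h := (ks_summable ha0 ha1 hm (-y)).hasSum
  rw [← hasSum_nat_add_iff' 1] at h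
  have h0 : ksC a m 0 = 1 := by simp [ksC]
  simpa [ksC_succ, h0, ksF] using h

lemma ks_hasSum {a m : ℝ} (ha0 : 0 < a) (ha1 : a < 1) (hm : 0 < m)
    (y : ℝ) : HasSum (fun n : ℕ => ksC a m n * (-y) ^ n *
    (Real.Gamma (1 - a) * Real.Gamma (1 + (a * m) * n) / Real.Gamma (1 + (a * m) * n - a)))
    (1 - y * Real.Gamma (1 - a) * ksF a m y) := by
  rw [← hasSum_nat_add_iff' 1]
  have hg : Real.Gamma (1 - a) ≠ 0 := (Real.Gamma_pos_of_pos (by linarith)).ne'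
  have h := (ks_summable ha0 ha1 hm (-y)).hasSum.mul_left (-y * Real.Gamma (1 - a))
  convert! h using 1
  · ext n
    have h1 := (Real.Gamma_pos_of_pos (ks_argpos ha0 ha1 hm n)).ne'
    have h2 : Real.Gamma (1 + (a * m) * ((n:ℝ) + 1)) ≠ 0 :=
      (Real.Gamma_pos_of_pos (by positivity)).ne'
    rw [ksC_succ, ksW]
    push_cast
    field_simp
    ring
  · simp [ksC, hg, ksF]

lemma ks_tsum_scale {a m : ℝ} (ha0 : 0 < a) (ha1 : a < 1) (hm : 0 < m)
    (y t : ℝ) : ∑' n, ksC a m n * (-y) ^ n * t ^ n = ksF a m (t * y) := by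
  unfold ksF
  refine tsum_congr fun n => ?_
  rw [mul_assoc, ← mul_pow]
  ring_nf

lemma ks_scale_mem {a m : ℝ} (ha0 : 0 < a) (ha1 : a < 1) (hm : 0 < m)
    {s y : ℝ} (hy : 0 ≤ y) (hs : s ∈ Set.Ioo (0:ℝ) 1) :
    0 ≤ s ^ (a * m) * y ∧ s ^ (a * m) * y ≤ y :=
  ⟨mul_nonneg (Real.rpow_nonneg hs.1.le _) hy,
    mul_le_of_le_one_left hy (Real.rpow_le_one hs.1.le hs.2.le (by positivity))⟩

lemma ks_L1 {a m : ℝ} (ha0 : 0 < a) (ha1 : a < 1) (hm : 0 < m)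
    (y : ℝ) (h : ∀ s ∈ Set.Ioo (0:ℝ) 1, ksF a m y ≤ ksF a m (s ^ (a * m) * y)) :
    1 - y * Real.Gamma (1 - a) * ksF a m y ≤ ksF a m y := by
  have hb : 0 < a * m := by positivity
  have hE := ks_extremum ha0 ha1 hb (fun n => -(ksC a m n * (-y) ^ n))
    (-(1 - y * Real.Gamma (1 - a) * ksF a m y)) (ks_summable ha0 ha1 hm (-y)).neg
    (by simpa only [neg_mul] using (ks_hasSum ha0 ha1 hm y).neg)
    (by
      intro s hs
      simp only [neg_mul, tsum_neg]
      rw [ks_tsum_scale ha0 ha1 hm]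
      exact neg_le_neg (h s hs))
  rw [tsum_neg] at hE
  change -ksF a m y ≤ _ at hE
  linarith

lemma ksF_pos {a m : ℝ} (ha0 : 0 < a) (ha1 : a < 1) (hm : 0 < m)
    (y : ℝ) (hy : 0 ≤ y) : 0 < ksF a m y := by
  by_contra! hneg
  obtain ⟨z, hz, hmin⟩ := isCompact_Icc.exists_isMinOn (Set.nonempty_Icc.2 hy)
    (ksF_cont ha0 ha1 hm y)
  have hzn : ksF a m z ≤ 0 := le_trans (hmin (Set.right_mem_Icc.2 hy)) hneg
  have h1 := ks_L1 ha0 ha1 hm z (by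
    intro s hs
    have := ks_scale_mem ha0 ha1 hm hz.1 hs
    exact hmin ⟨this.1, this.2.trans hz.2⟩)
  have hg : 0 < Real.Gamma (1 - a) := Real.Gamma_pos_of_pos (by linarith)
  have : z * Real.Gamma (1 - a) * ksF a m z ≤ 0 :=
    mul_nonpos_of_nonneg_of_nonpos (mul_nonneg hz.1 hg.le) hzn
  linarith

lemma ks_L2 {a m : ℝ} (ha0 : 0 < a) (ha1 : a < 1) (hm : 0 < m)
    (y r : ℝ) (h : ∀ s ∈ Set.Ioo (0:ℝ) 1,
      ksF a m (s ^ (a * m) * y) - ksF a m (r * (s ^ (a * m) * y)) ≤ ksF a m y - ksF a m (r * y)) :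
    ksF a m y - ksF a m (r * y) ≤
      r * y * Real.Gamma (1 - a) * ksF a m (r * y) - y * Real.Gamma (1 - a) * ksF a m y := by
  have hb : 0 < a * m := by positivity
  have s1 := ks_summable ha0 ha1 hm (-y)
  have s2 := ks_summable ha0 ha1 hm (-(r * y))
  have hT : ∑' n, (ksC a m n * (-y) ^ n - ksC a m n * (-(r * y)) ^ n)
      = ksF a m y - ksF a m (r * y) := s1.tsum_sub s2
  have hE := ks_extremum ha0 ha1 hb
    (fun n => ksC a m n * (-y) ^ n - ksC a m n * (-(r * y)) ^ n) _ (s1.sub s2)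
    (by simpa only [sub_mul] using (ks_hasSum ha0 ha1 hm y).sub (ks_hasSum ha0 ha1 hm (r * y)))
    (by
      intro s hs
      rw [hT]
      refine le_trans (le_of_eq ?_) (h s hs)
      rw [show r * (s ^ (a * m) * y) = s ^ (a * m) * (r * y) by ring]
      rw [← ks_tsum_scale ha0 ha1 hm, ← ks_tsum_scale ha0 ha1 hm, ← Summable.tsum_sub]
      · refine tsum_congr fun n => ?_
        ring
      · refine (ks_summable ha0 ha1 hm (-y * s ^ (a * m))).congr fun n => ?_
        rw [mul_pow, mul_assoc]
      · refine (ks_summable ha0 ha1 hm (-(r * y) * s ^ (a * m))).congr fun n => ?_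
        rw [mul_pow (-(r * y)), mul_assoc])
  rw [hT] at hE
  linarith

lemma ksF_mono {a m : ℝ} (ha0 : 0 < a) (ha1 : a < 1) (hm : 0 < m)
    (y r : ℝ) (hy : 0 ≤ y) (hr0 : 0 ≤ r) (hr1 : r ≤ 1) :
    ksF a m y ≤ ksF a m (r * y) := by
  by_contra! hneg
  have hc : ContinuousOn (fun z => ksF a m z - ksF a m (r * z)) (Set.Icc 0 y) := by
    refine (ksF_cont ha0 ha1 hm y).sub ((ksF_cont ha0 ha1 hm y).comp (by fun_prop) ?_)
    intro z hz
    exact ⟨mul_nonneg hr0 hz.1, (mul_le_of_le_one_left hz.1 hr1).trans hz.2⟩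
  obtain ⟨z, hz, hmax⟩ := isCompact_Icc.exists_isMaxOn (Set.nonempty_Icc.2 hy) hc
  have hzn : ksF a m y - ksF a m (r * y) ≤ ksF a m z - ksF a m (r * z) :=
    hmax (Set.right_mem_Icc.2 hy)
  have h1 := ks_L2 ha0 ha1 hm z r (by
    intro s hs
    have := ks_scale_mem ha0 ha1 hm hz.1 hs
    exact hmax ⟨this.1, this.2.trans hz.2⟩)
  have hg : 0 < Real.Gamma (1 - a) := Real.Gamma_pos_of_pos (by linarith)
  have hF := ksF_pos ha0 ha1 hm (r * z) (mul_nonneg hr0 hz.1)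
  have h2 : 0 ≤ z * Real.Gamma (1 - a) * ((ksF a m z - ksF a m (r * z)) + (1 - r) * ksF a m (r * z)) :=
    mul_nonneg (mul_nonneg hz.1 hg.le)
      (add_nonneg (by linarith) (mul_nonneg (by linarith) hF.le))
  nlinarith

open MeasureTheory in
lemma ksF_upper {a m : ℝ} (ha0 : 0 < a) (ha1 : a < 1) (hm : 0 < m)
    (y : ℝ) (hy : 0 ≤ y) : ksF a m y ≤ 1 - y * ksW a m 0 * ksF a m y := by
  rcases hy.eq_or_lt with rfl | hy0
  · have := ksF_mono ha0 ha1 hm 0 0 le_rfl le_rfl zero_le_one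
    have h := ksF_tail ha0 ha1 hm 0
    simp at h
    have h2 := h.unique hasSum_zero
    linarith
  have hb : 0 < a * m := by positivity
  have hga : 0 < Real.Gamma a := Real.Gamma_pos_of_pos ha0
  have hB := fun n : ℕ => ks_beta (u := 1 + (a * m) * (n + 1) - a) (v := a)
    (ks_argpos ha0 ha1 hm n) ha0
  have hfun : ∀ n : ℕ, Set.EqOn (fun s : ℝ => s ^ (1 + (a * m) * (((0:ℕ):ℝ) + 1) - a - 1) * (1 - s) ^ (a - 1)
      - s ^ (1 + (a * m) * ((n:ℝ) + 1) - a - 1) * (1 - s) ^ (a - 1))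
      (fun s : ℝ => (1 - s ^ (a * m * n)) * (s ^ (a * m - a) * (1 - s) ^ (a - 1))) (Set.Ioo 0 1) := by
    intro n s hs
    simp only [Nat.cast_zero]
    rw [show 1 + (a * m) * ((n:ℝ) + 1) - a - 1 = a * m * n + (a * m - a) by ring,
      show 1 + (a * m) * ((0:ℝ) + 1) - a - 1 = a * m - a by ring, Real.rpow_add hs.1]
    ring
  have hT : HasSum (fun n => ksC a m n * (-y) ^ n * ksW a m n) ((ksF a m y - 1) / (-y)) := by
    convert! (ksF_tail ha0 ha1 hm y).div_const (-y) using 2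
    field_simp
    ring
  have hH : HasSum (fun n => -(ksC a m n * (-y) ^ n) * (Real.Gamma a * (ksW a m 0 - ksW a m n)))
      (Real.Gamma a * ((ksF a m y - 1) / (-y) - ksW a m 0 * ksF a m y)) := by
    convert! (hT.sub ((ks_summable ha0 ha1 hm (-y)).hasSum.mul_left (ksW a m 0))).mul_left
      (Real.Gamma a) using 2
    ring
  have hnn := ks_kernel hb (fun s => s ^ (a * m - a) * (1 - s) ^ (a - 1))
    (fun n => Real.Gamma a * (ksW a m 0 - ksW a m n)) (fun n => -(ksC a m n * (-y) ^ n))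
    (fun s hs => mul_nonneg (Real.rpow_nonneg hs.1.le _) (Real.rpow_nonneg (by linarith [hs.2]) _))
    (fun n => ((hB 0).1.sub (hB n).1).congr_fun (hfun n) measurableSet_Ioo)
    (fun n => by
      rw [← setIntegral_congr_fun measurableSet_Ioo (hfun n), integral_sub (hB 0).1 (hB n).1,
        (hB 0).2, (hB n).2]
      simp only [ksW, sub_add_cancel]
      ring)
    (ks_summable ha0 ha1 hm (-y)).neg hH.summable
    (by
      intro s hs
      simp only [neg_mul, tsum_neg]
      rw [ks_tsum_scale ha0 ha1 hm]
      exact neg_le_neg (ksF_mono ha0 ha1 hm y _ hy (Real.rpow_nonneg hs.1.le _)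
        (Real.rpow_le_one hs.1.le hs.2.le hb.le)))
  rw [hH.tsum_eq] at hnn
  have h3 := nonneg_of_mul_nonneg_right hnn hga
  have h4 := mul_nonneg h3 hy0.le
  have h5 : (ksF a m y - 1) / (-y) * y = 1 - ksF a m y := by
    field_simp
    ring
  rw [sub_mul, h5] at h4
  linarith



/-- Two-sided bound for the Kilbas–Saigo function `E_{a,m,m-1}(-x)` for `x ≥ 0`,
`0 < a < 1`, `m > 0`; in particular `0 < E_{a,m,m-1}(-x) ≤ 1`. -/
theorem kilbasSaigo_bounds (a m : ℝ) (ha0 : 0 < a) (ha1 : a < 1) (hm : 0 < m)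
    (x : ℝ) (hx : 0 ≤ x) :
    let E : ℝ := ∑' n : ℕ, (∏ k ∈ Finset.range n,
      Real.Gamma (1 + a * (k * m + (m - 1))) /
        Real.Gamma (1 + a * (k * m + (m - 1) + 1))) * (-x) ^ n
    1 / (1 + Real.Gamma (1 - a) * x) ≤ E ∧
      E ≤ 1 / (1 + (Real.Gamma (1 + a * (m - 1)) / Real.Gamma (1 + a * m)) * x) ∧
      0 < E ∧ E ≤ 1 := by
  have hg : 0 < Real.Gamma (1 - a) := Real.Gamma_pos_of_pos (by linarith)
  have hW := ksW_pos ha0 ha1 hm 0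
  have hpos := ksF_pos ha0 ha1 hm x hx
  have hlow := ks_L1 ha0 ha1 hm x (fun s hs => ksF_mono ha0 ha1 hm x _ hx
    (Real.rpow_nonneg hs.1.le _) (Real.rpow_le_one hs.1.le hs.2.le (by positivity)))
  have hup := ksF_upper ha0 ha1 hm x hx
  have hw0 : Real.Gamma (1 + a * (m - 1)) / Real.Gamma (1 + a * m) = ksW a m 0 := by
    unfold ksW
    congr 2 <;> push_cast <;> ring
  intro E
  have hE : E = ksF a m x := rfl
  rw [hE, hw0]
  have h1 : 0 ≤ Real.Gamma (1 - a) * x := mul_nonneg hg.le hx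
  have h2 : 0 ≤ ksW a m 0 * x := mul_nonneg hW.le hx
  refine ⟨?_, ?_, hpos, ?_⟩
  · rw [div_le_iff₀ (by linarith)]
    linarith
  · rw [le_div_iff₀ (by linarith)]
    linarith
  · have := mul_nonneg h2 hpos.le
    linarith
end

section
/- For a ∈ (0,1), m > 0, and l > m − 1/a, the Kilbas–Saigo function satisfies the asymptotic relation E_{a,m,l}(−x) ~ Γ(1+a(l+1−m)) / (Γ(1+a(l−m))·x) as x → ∞ along the positive real axis; that is, lim_{x→∞} x · E_{a,m,l}(−x) = Γ(1+a(l+1−m))/Γ(1+a(l−m)). -/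
open Real Finset Filter

namespace KS

open MeasureTheory Set Topology

/-- The power series `∑ d n (-x)^n`. -/
noncomputable def F (d : ℕ → ℝ) (x : ℝ) : ℝ := ∑' n, d n * (-x) ^ n

/-- Entire coefficient sequences. -/
def Ent (d : ℕ → ℝ) : Prop := ∀ x : ℝ, Summable fun n => |d n| * |x| ^ n

lemma Ent.summable {d : ℕ → ℝ} (h : Ent d) (x : ℝ) : Summable fun n => d n * (-x) ^ n := by
  refine Summable.of_norm ?_
  simpa [abs_mul, abs_pow] using h x

lemma Ent.continuous {d : ℕ → ℝ} (h : Ent d) : Continuous (F d) := by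
  rw [continuous_iff_continuousAt]
  intro x
  have : ContinuousOn (F d) (Metric.ball 0 (|x| + 1)) := by
    refine continuousOn_tsum (u := fun n => |d n| * |(|x| + 1)| ^ n) (fun n => by fun_prop) (h _) ?_
    intro n y hy
    have : |y| ≤ |(|x| + 1)| := by
      rw [abs_of_nonneg (by positivity : 0 ≤ |x| + 1)]
      simpa using (Metric.mem_ball.1 hy).le
    rw [Real.norm_eq_abs, abs_mul, abs_pow, abs_neg]
    gcongr
  exact this.continuousAt (Metric.isOpen_ball.mem_nhds (by simp))

lemma beta_integrable {p r : ℝ} (hp : 0 < p) (hr : 0 < r) :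
    IntegrableOn (fun u : ℝ => u ^ (p - 1) * (1 - u) ^ (r - 1)) (Ioo 0 1) := by
  have h := Complex.betaIntegral_convergent (u := p) (v := r) (by simpa) (by simpa)
  rw [intervalIntegrable_iff_integrableOn_Ioo_of_le (by simp)] at h
  refine (h.re).congr ?_
  refine (ae_restrict_mem measurableSet_Ioo).mono fun x hx => ?_
  have h1 : 0 ≤ 1 - x := by linarith [hx.2]
  beta_reduce
  norm_cast
  rw [← Complex.ofReal_cpow hx.1.le, ← Complex.ofReal_cpow h1, RCLike.re_to_complex,
        Complex.re_mul_ofReal, Complex.ofReal_re]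

lemma beta_integral {p r : ℝ} (hp : 0 < p) (hr : 0 < r) :
    ∫ u in Ioo (0:ℝ) 1, u ^ (p - 1) * (1 - u) ^ (r - 1) = Gamma p * Gamma r / Gamma (p + r) := by
  have h0 := ProbabilityTheory.beta_eq_betaIntegralReal p r hp hr
  rw [ProbabilityTheory.beta] at h0
  rw [h0]
  have h := Complex.betaIntegral_convergent (u := p) (v := r) (by simpa) (by simpa)
  rw [intervalIntegrable_iff_integrableOn_Ioc_of_le (by simp)] at h
  rw [Complex.betaIntegral, intervalIntegral.integral_of_le (by norm_num),
      ← integral_Ioc_eq_integral_Ioo, ← RCLike.re_to_complex, ← integral_re h]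
  refine setIntegral_congr_fun measurableSet_Ioc fun x ⟨hx1, hx₂⟩ ↦ ?_
  norm_cast
  rw [← Complex.ofReal_cpow, ← Complex.ofReal_cpow, RCLike.re_to_complex,
        Complex.re_mul_ofReal, Complex.ofReal_re]
  all_goals linarith

lemma weight_nonneg {p r u : ℝ} (hu : u ∈ Ioo (0:ℝ) 1) : 0 ≤ u ^ (p - 1) * (1 - u) ^ (r - 1) :=
  mul_nonneg (rpow_nonneg hu.1.le _) (rpow_nonneg (by linarith [hu.2]) _)

lemma F_int {d : ℕ → ℝ} (h : Ent d) {p r δ : ℝ} (hp : 0 < p) (hr : 0 < r) (hδ : 0 < δ) (x : ℝ) :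
    IntegrableOn (fun u : ℝ => u ^ (p - 1) * (1 - u) ^ (r - 1) * F d (x * u ^ δ)) (Ioo 0 1) := by
  obtain ⟨C, hC⟩ := (isCompact_Icc (a := -|x|) (b := |x|)).exists_bound_of_continuousOn
    h.continuous.continuousOn
  refine Integrable.mul_bdd (c := C) (beta_integrable hp hr) ?_ ?_
  · exact (h.continuous.measurable.comp (by fun_prop)).aestronglyMeasurable
  · refine (ae_restrict_mem measurableSet_Ioo).mono fun u hu => hC _ ?_
    have h1 : u ^ δ ≤ 1 := rpow_le_one hu.1.le hu.2.le hδ.le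
    have h0 : 0 ≤ u ^ δ := rpow_nonneg hu.1.le _
    rw [Set.mem_Icc, ← abs_le, abs_mul, abs_of_nonneg h0]
    exact mul_le_of_le_one_right (abs_nonneg _) h1

lemma weight_mul {p r δ u : ℝ} (hu : u ∈ Ioo (0:ℝ) 1) (n : ℕ) :
    u ^ (p - 1) * (1 - u) ^ (r - 1) * (u ^ δ) ^ n
      = u ^ (p + δ * n - 1) * (1 - u) ^ (r - 1) := by
  rw [← rpow_mul_natCast hu.1.le, show p + δ * n - 1 = (p - 1) + δ * n by ring, rpow_add hu.1]
  ring

lemma F_int_hasSum {d : ℕ → ℝ} (h : Ent d) {p r δ : ℝ} (hp : 0 < p) (hr : 0 < r) (hδ : 0 < δ)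
    (x : ℝ) :
    HasSum (fun n : ℕ => d n * (Gamma (p + δ * n) * Gamma r / Gamma (p + δ * n + r)) * (-x) ^ n)
      (∫ u in Ioo (0:ℝ) 1, u ^ (p - 1) * (1 - u) ^ (r - 1) * F d (x * u ^ δ)) := by
  have hpn : ∀ n : ℕ, 0 < p + δ * n := fun n => by positivity
  have e1 : ∀ n : ℕ, ∀ u ∈ Ioo (0:ℝ) 1,
      (d n * (-x) ^ n) * (u ^ (p + δ * n - 1) * (1 - u) ^ (r - 1))
      = u ^ (p - 1) * (1 - u) ^ (r - 1) * (d n * (-(x * u ^ δ)) ^ n) := by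
    intro n u hu
    rw [← weight_mul hu, ← neg_mul, mul_pow]; ring
  have key := hasSum_integral_of_summable_integral_norm
    (μ := volume.restrict (Ioo (0:ℝ) 1))
    (F := fun (n : ℕ) (u : ℝ) => (d n * (-x) ^ n) * (u ^ (p + δ * n - 1) * (1 - u) ^ (r - 1)))
    (fun n => (beta_integrable (hpn n) hr).const_mul _) ?_
  · convert! key using 1
    · ext n
      rw [integral_const_mul, beta_integral (hpn n) hr]; ring
    · refine setIntegral_congr_fun measurableSet_Ioo fun u hu => ?_
      simp only [F]
      rw [← tsum_mul_left]
      exact tsum_congr fun n => (e1 n u hu).symm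
  · refine Summable.of_nonneg_of_le (fun n => by positivity) (fun n => ?_)
      ((h x).mul_right (Gamma p * Gamma r / Gamma (p + r)))
    simp_rw [norm_mul (d n * (-x) ^ n)]
    rw [integral_const_mul, Real.norm_eq_abs, abs_mul, abs_pow, abs_neg, ← beta_integral hp hr]
    refine mul_le_mul_of_nonneg_left ?_ (by positivity)
    refine setIntegral_mono_on (beta_integrable (hpn n) hr).norm (beta_integrable hp hr)
      measurableSet_Ioo fun u hu => ?_
    rw [Real.norm_of_nonneg (weight_nonneg hu), ← weight_mul hu]
    refine mul_le_of_le_one_right (weight_nonneg hu) ?_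
    exact pow_le_one₀ (rpow_nonneg hu.1.le _) (rpow_le_one hu.1.le hu.2.le hδ.le)

/-- Entire, nonnegative and antitone on the half line. -/
structure Good (d : ℕ → ℝ) : Prop where
  ent : Ent d
  nonneg : ∀ x, 0 ≤ x → 0 ≤ F d x
  anti : ∀ x y, 0 ≤ x → x ≤ y → F d y ≤ F d x

lemma prod_Gamma {p : ℝ} (hp : 0 < p) (n : ℕ) :
    ∏ k ∈ range n, (p + k) = Gamma (p + n) / Gamma p := by
  induction n with
  | zero => simp [(Gamma_pos_of_pos hp).ne']
  | succ n ih =>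
    rw [prod_range_succ, ih, Nat.cast_succ, ← add_assoc, Gamma_add_one (by positivity)]
    ring

lemma Good.beta {d : ℕ → ℝ} (h : Good d) {p q : ℝ} (hp : 0 < p) (hpq : p < q) :
    Good fun n => d n * ∏ k ∈ range n, ((p + k) / (q + k)) := by
  have hq : 0 < q := hp.trans hpq
  have hr : 0 < q - p := sub_pos.2 hpq
  have gp := Gamma_pos_of_pos hp
  have gq := Gamma_pos_of_pos hq
  have gr := Gamma_pos_of_pos hr
  have hF : ∀ x, F (fun n => d n * ∏ k ∈ range n, ((p + k) / (q + k))) x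
      = (Gamma q / (Gamma p * Gamma (q - p))) *
        ∫ u in Ioo (0:ℝ) 1, u ^ (p - 1) * (1 - u) ^ (q - p - 1) * F d (x * u ^ (1:ℝ)) := by
    intro x
    rw [← (F_int_hasSum h.ent hp hr one_pos x).tsum_eq, ← tsum_mul_left]
    refine tsum_congr fun n => ?_
    have := Gamma_pos_of_pos (by positivity : 0 < q + n)
    beta_reduce
    rw [prod_div_distrib, prod_Gamma hp, prod_Gamma hq, one_mul,
      show p + n + (q - p) = q + n by ring]
    field_simp
  refine ⟨?_, ?_, ?_⟩
  · intro x
    refine Summable.of_nonneg_of_le (fun n => by positivity) (fun n => ?_) (h.ent x)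
    rw [abs_mul]
    gcongr
    refine mul_le_of_le_one_right (abs_nonneg _) ?_
    rw [abs_of_nonneg (prod_nonneg fun k _ => by positivity)]
    refine prod_le_one (fun k _ => by positivity) fun k _ => ?_
    rw [div_le_one (by positivity)]; linarith
  · intro x hx
    rw [hF]
    refine mul_nonneg (by positivity) (setIntegral_nonneg measurableSet_Ioo fun u hu => ?_)
    exact mul_nonneg (weight_nonneg hu) (h.nonneg _ (mul_nonneg hx (rpow_nonneg hu.1.le _)))
  · intro x y hx hxy
    rw [hF, hF]
    gcongr ?_ * ?_
    refine setIntegral_mono_on (F_int h.ent hp hr one_pos _) (F_int h.ent hp hr one_pos _)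
      measurableSet_Ioo fun u hu => ?_
    have := rpow_nonneg hu.1.le (1:ℝ)
    refine mul_le_mul_of_nonneg_left (h.anti _ _ (by positivity) (by gcongr)) (weight_nonneg hu)

lemma good_exp {c : ℝ} (hc : 0 ≤ c) : Good fun n => c ^ n / n.factorial := by
  have hF : ∀ x, F (fun n => c ^ n / n.factorial) x = exp (-(c * x)) := by
    intro x
    rw [Real.exp_eq_exp_ℝ, NormedSpace.exp_eq_tsum_div]
    refine tsum_congr fun n => ?_
    rw [← mul_neg, mul_pow]; ring
  refine ⟨fun x => ?_, fun x hx => ?_, fun x y hx hxy => ?_⟩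
  · refine (Real.summable_pow_div_factorial (c * |x|)).congr fun n => ?_
    rw [abs_of_nonneg (a := c ^ n / n.factorial) (by positivity), mul_pow]; ring
  · rw [hF]; positivity
  · rw [hF, hF]; gcongr

lemma summable_prod {B : ℕ → ℝ} (hB : ∀ᶠ n in atTop, |B n| ≤ 1 / 2) :
    Summable fun n => ∏ k ∈ range n, B k := by
  refine summable_of_ratio_norm_eventually_le (r := 1/2) (by norm_num) ?_
  filter_upwards [hB] with n hn
  rw [prod_range_succ, norm_mul, mul_comm, Real.norm_eq_abs (B n)]
  gcongr

lemma ent_prod {b : ℕ → ℝ} (hb0 : ∀ k, 0 ≤ b k) (hb : Tendsto b atTop (𝓝 0)) :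
    Ent fun n => ∏ k ∈ range n, b k := by
  intro x
  have hbx : Tendsto (fun k => abs (b k * |x|)) atTop (𝓝 0) := by
    simpa using (hb.mul_const |x|).abs
  refine (summable_prod (B := fun k => b k * |x|) (hbx.eventually_le_const (by norm_num))).congr
    fun n => ?_
  rw [abs_of_nonneg (prod_nonneg fun k _ => hb0 k), prod_mul_distrib, prod_const, card_range]

lemma good_lim {b : ℕ → ℝ} {bN : ℕ → ℕ → ℝ} (hN0 : ∀ N k, 0 ≤ bN N k)
    (hanti : ∀ N, Antitone (bN N)) (hlim : ∀ k, Tendsto (fun N => bN N k) atTop (𝓝 (b k)))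
    (hb : Tendsto b atTop (𝓝 0)) (hG : ∀ N, Good fun n => ∏ k ∈ range n, bN N k) :
    Good fun n => ∏ k ∈ range n, b k := by
  have hb0 : ∀ k, 0 ≤ b k := fun k => ge_of_tendsto' (hlim k) fun N => hN0 N k
  have hT : ∀ x, Tendsto (fun N => F (fun n => ∏ k ∈ range n, bN N k) x) atTop
      (𝓝 (F (fun n => ∏ k ∈ range n, b k) x)) := by
    intro x
    have hbx : Tendsto (fun k => b k * |x|) atTop (𝓝 0) := by simpa using hb.mul_const |x|
    obtain ⟨K, hK⟩ := (hbx.eventually_lt_const (by norm_num : (0:ℝ) < 1/2)).exists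
    refine tendsto_tsum_of_dominated_convergence
      (bound := fun n => ∏ k ∈ range n, (if k < K then b 0 * |x| + 1 else (1/2 : ℝ))) ?_ ?_ ?_
    · refine summable_prod ?_
      filter_upwards [eventually_ge_atTop K] with n hn
      rw [if_neg (by omega)]; norm_num [abs_of_nonneg]
    · intro n
      exact (tendsto_finsetProd _ fun k _ => hlim k).mul_const _
    · filter_upwards [((hlim 0).mul_const |x|).eventually_lt_const (lt_add_one _),
        ((hlim K).mul_const |x|).eventually_lt_const hK] with N h0 hKN n
      rw [norm_mul, norm_pow, norm_neg, Real.norm_eq_abs, Real.norm_eq_abs,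
        abs_of_nonneg (prod_nonneg fun k _ => hN0 N k)]
      have e : (∏ k ∈ range n, bN N k) * |x| ^ n = ∏ k ∈ range n, (bN N k * |x|) := by
        rw [prod_mul_distrib, prod_const, card_range]
      rw [e]
      refine prod_le_prod (fun k _ => mul_nonneg (hN0 N k) (abs_nonneg _)) fun k _ => ?_
      split_ifs with hk
      · refine le_trans ?_ h0.le
        gcongr
        exact hanti N (Nat.zero_le k)
      · refine le_trans ?_ hKN.le
        gcongr
        exact hanti N (not_lt.1 hk)
  refine ⟨ent_prod hb0 hb, fun x hx => ge_of_tendsto' (hT x) fun N => (hG N).nonneg x hx,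
    fun x y hx hxy => le_of_tendsto_of_tendsto' (hT y) (hT x) fun N => (hG N).anti x y hx hxy⟩


lemma good_aux {p₀ q₀ c : ℝ} (hc : 0 ≤ c) (hp₀ : 0 < p₀) (h₀ : p₀ < q₀) (p q : ℕ → ℝ)
    (hp : ∀ j, 0 < p j) (hpq : ∀ j, p j < q j) (M : ℕ) :
    Good fun n : ℕ => c ^ n / n.factorial * (∏ k ∈ range n, ((p₀ + k) / (q₀ + k))) *
      ∏ j ∈ range M, ∏ k ∈ range n, ((p j + k) / (q j + k)) := by
  induction M with
  | zero => simpa using (good_exp hc).beta hp₀ h₀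
  | succ M ih =>
    simp_rw [prod_range_succ _ M, ← mul_assoc]
    exact ih.beta (hp M) (hpq M)

/-- approximating factor -/
noncomputable def Q (a : ℝ) (N : ℕ) (s : ℝ) : ℝ :=
  (N : ℝ) ^ (1 - a) * (1 / s) * ∏ j ∈ range (N + 1), ((s + a + j) / (s + 1 + j))

lemma good_Q {a β δ : ℝ} (ha0 : 0 < a) (ha1 : a < 1) (hδ : 0 < δ) (hβ : δ < β) (N : ℕ) :
    Good fun n => ∏ k ∈ range n, Q a N (β + k * δ) := by
  have hβ0 : 0 < β := hδ.trans hβ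
  have := good_aux (p₀ := 1) (q₀ := β / δ) (c := (N : ℝ) ^ (1 - a) / δ) (by positivity) one_pos
    (by rwa [lt_div_iff₀ hδ, one_mul]) (fun j => (β + a + j) / δ) (fun j => (β + 1 + j) / δ)
    (fun j => by positivity) (fun j => by gcongr) (N + 1)
  convert this using 2 with n
  rw [Finset.prod_comm]
  have e : ((N : ℝ) ^ (1 - a) / δ) ^ n / n.factorial
      = ∏ k ∈ range n, ((N : ℝ) ^ (1 - a) / δ / (1 + k)) := by
    rw [prod_div_distrib, prod_const, card_range, ← prod_range_add_one_eq_factorial]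
    push_cast
    simp_rw [add_comm]
  rw [e, ← prod_mul_distrib, ← prod_mul_distrib]
  refine prod_congr rfl fun k _ => ?_
  rw [Q]
  congr 1
  · field_simp
  · refine prod_congr rfl fun j _ => ?_
    rw [div_eq_div_iff (by positivity) (by positivity)]
    field_simp
    ring

lemma Q_nonneg {a : ℝ} (ha0 : 0 < a) (N : ℕ) {s : ℝ} (hs : 0 < s) : 0 ≤ Q a N s := by
  unfold Q; positivity

lemma Q_eq {a : ℝ} (N : ℕ) {s : ℝ} (hs : 0 < s) :
    Q a N s = (N : ℝ) ^ (1 - a) * (∏ j ∈ range (N + 1), ((s + a + j) / (s + j))) / (s + 1 + N) := by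
  have h : ∏ j ∈ range (N + 1), (s + 1 + j) = (∏ j ∈ range (N + 1), (s + j)) * (s + 1 + N) / s := by
    rw [eq_div_iff hs.ne']
    have h1 := prod_range_succ (fun j : ℕ => s + j) (N + 1)
    rw [prod_range_succ'] at h1
    push_cast at h1
    have e : ∀ j : ℕ, s + ((j : ℝ) + 1) = s + 1 + j := fun j => by ring
    simp_rw [e] at h1
    rw [add_zero] at h1
    rw [h1]
  have h2 : ∏ j ∈ range (N + 1), (s + j) ≠ 0 := (prod_pos fun j _ => by positivity).ne'
  have h3 : s + 1 + N ≠ 0 := by positivity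
  rw [Q, prod_div_distrib, prod_div_distrib, h]
  field_simp

lemma Q_anti {a : ℝ} (ha0 : 0 < a) (N : ℕ) {s t : ℝ} (hs : 0 < s) (hst : s ≤ t) :
    Q a N t ≤ Q a N s := by
  have ht := hs.trans_le hst
  rw [Q_eq N hs, Q_eq N ht]
  have h : ∏ j ∈ range (N + 1), ((t + a + j) / (t + j))
      ≤ ∏ j ∈ range (N + 1), ((s + a + j) / (s + j)) := by
    refine prod_le_prod (fun j _ => by positivity) fun j _ => ?_
    rw [div_le_div_iff₀ (by positivity) (by positivity)]
    nlinarith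
  have h0 : 0 ≤ ∏ j ∈ range (N + 1), ((s + a + j) / (s + j)) :=
    prod_nonneg fun j _ => by positivity
  exact div_le_div₀ (by positivity) (mul_le_mul_of_nonneg_left h (by positivity))
    (by positivity) (by linarith)

lemma Q_lim {a : ℝ} (ha0 : 0 < a) {s : ℝ} (hs : 0 < s) :
    Tendsto (fun N => Q a N s) atTop (𝓝 (Gamma s / Gamma (s + a))) := by
  have h1 := (GammaSeq_tendsto_Gamma s).div (GammaSeq_tendsto_Gamma (s + a))
    (Gamma_pos_of_pos (by positivity)).ne'
  have h2 : Tendsto (fun N : ℕ => (N : ℝ) / (N + (s + 1))) atTop (𝓝 1) :=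
    tendsto_natCast_div_add_atTop (s + 1)
  have h3 := h1.mul h2
  rw [mul_one] at h3
  refine h3.congr' ?_
  filter_upwards [eventually_gt_atTop 0] with N hN
  have hN' : (0:ℝ) < N := by exact_mod_cast hN
  have h2 : ∏ j ∈ range (N + 1), (s + j) ≠ 0 := (prod_pos fun j _ => by positivity).ne'
  have h2' : ∏ j ∈ range (N + 1), (s + a + j) ≠ 0 := (prod_pos fun j _ => by positivity).ne'
  rw [Q_eq N hs, Pi.div_apply, GammaSeq, GammaSeq, prod_div_distrib, rpow_sub hN', rpow_add hN',
    rpow_one, show s + 1 + (N:ℝ) = N + (s + 1) by ring]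
  have : (N.factorial : ℝ) ≠ 0 := by positivity
  have := (rpow_pos_of_pos hN' s).ne'
  have := (rpow_pos_of_pos hN' a).ne'
  field_simp

lemma Gratio_lim {a β δ : ℝ} (ha0 : 0 < a) (hδ : 0 < δ) (hβ : 0 < β) :
    Tendsto (fun k : ℕ => Gamma (β + k * δ) / Gamma (β + k * δ + a)) atTop (𝓝 0) := by
  have h : Tendsto (fun k : ℕ => ∫ u in Ioo (0:ℝ) 1,
      u ^ (β - 1) * (1 - u) ^ (a - 1) * (u ^ δ) ^ k) atTop (𝓝 (∫ u in Ioo (0:ℝ) 1, 0)) := by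
    refine tendsto_integral_of_dominated_convergence (fun u => u ^ (β - 1) * (1 - u) ^ (a - 1))
      (fun k => by fun_prop) (beta_integrable hβ ha0) ?_ ?_
    · intro k
      refine (ae_restrict_mem measurableSet_Ioo).mono fun u hu => ?_
      have h1 := rpow_nonneg hu.1.le δ
      rw [norm_mul, Real.norm_of_nonneg (weight_nonneg hu), Real.norm_of_nonneg (by positivity)]
      refine mul_le_of_le_one_right (weight_nonneg hu) ?_
      exact pow_le_one₀ h1 (rpow_le_one hu.1.le hu.2.le hδ.le)
    · refine (ae_restrict_mem measurableSet_Ioo).mono fun u hu => ?_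
      have := (tendsto_pow_atTop_nhds_zero_of_lt_one (rpow_nonneg hu.1.le δ)
        (rpow_lt_one hu.1.le hu.2 hδ)).const_mul (u ^ (β - 1) * (1 - u) ^ (a - 1))
      simpa using this
  rw [integral_zero] at h
  have h' := h.div_const (Gamma a)
  rw [zero_div] at h'
  refine h'.congr fun k => ?_
  rw [setIntegral_congr_fun measurableSet_Ioo (fun u hu => weight_mul hu k),
    beta_integral (by positivity) ha0, mul_comm δ]
  have := (Gamma_pos_of_pos ha0).ne'
  field_simp

lemma good_c {a β δ : ℝ} (ha0 : 0 < a) (ha1 : a < 1) (hδ : 0 < δ) (hβ : δ < β) :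
    Good fun n => ∏ k ∈ range n, (Gamma (β + k * δ) / Gamma (β + k * δ + a)) := by
  have hβ0 : 0 < β := hδ.trans hβ
  refine good_lim (bN := fun N k => Q a N (β + k * δ)) (fun N k => Q_nonneg ha0 N (by positivity))
    (fun N i j hij => Q_anti ha0 N (by positivity) (by gcongr))
    (fun k => Q_lim ha0 (by positivity)) (Gratio_lim ha0 hδ hβ0)
    (fun N => good_Q ha0 ha1 hδ hβ N)

/-- The averaged function. -/
noncomputable def Φ (f : ℝ → ℝ) (β δ x : ℝ) : ℝ := ∫ u in Ioo (0:ℝ) 1, u ^ (β - 1) * f (x * u ^ δ)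

lemma ratio_lim {g β : ℝ} (hβ : 0 < β) :
    Tendsto (fun t : ℝ => (1 - t ^ g) / (1 - t ^ β)) (𝓝[<] 1) (𝓝 (g / β)) := by
  have h : ∀ c : ℝ, Tendsto (fun t : ℝ => (t - 1)⁻¹ * (t ^ c - 1)) (𝓝[<] 1) (𝓝 c) := by
    intro c
    have h1 : HasDerivAt (fun t : ℝ => t ^ c) c 1 := by
      simpa using Real.hasDerivAt_rpow_const (x := 1) (p := c) (Or.inl one_ne_zero)
    have h2 := (hasDerivAt_iff_tendsto_slope.1 h1).mono_left
      (nhdsWithin_mono 1 (fun t (ht : t < 1) => ht.ne))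
    refine h2.congr fun t => ?_
    simp [slope_def_module]
  refine ((h g).div (h β) hβ.ne').congr' ?_
  filter_upwards [self_mem_nhdsWithin] with t ht
  have : t - 1 ≠ 0 := sub_ne_zero.2 (ne_of_lt ht)
  rw [Pi.div_apply, mul_div_mul_left _ _ (inv_ne_zero this), ← neg_div_neg_eq, neg_sub, neg_sub]

lemma scale_int {f : ℝ → ℝ} {β δ : ℝ} {t : ℝ} (ht0 : 0 < t) (x : ℝ) :
    ∫ u in (0:ℝ)..t, u ^ (β - 1) * f (x * u ^ δ) = t ^ β * Φ f β δ (x * t ^ δ) := by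
  have h := intervalIntegral.mul_integral_comp_mul_left (a := 0) (b := 1)
    (f := fun u => u ^ (β - 1) * f (x * u ^ δ)) t
  rw [mul_zero, mul_one] at h
  rw [← h, Φ, ← integral_Ioc_eq_integral_Ioo, ← intervalIntegral.integral_of_le zero_le_one,
    ← intervalIntegral.integral_const_mul, ← intervalIntegral.integral_const_mul]
  refine intervalIntegral.integral_congr fun u hu => ?_
  rw [Set.uIcc_of_le zero_le_one] at hu
  beta_reduce
  rw [mul_rpow ht0.le hu.1, mul_rpow ht0.le hu.1, rpow_sub_one ht0.ne']
  field_simp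

lemma rpow_int {f : ℝ → ℝ} (hf : Continuous f) {β δ : ℝ} (hβ : 0 < β) (hδ : 0 < δ) (x s t : ℝ) :
    IntervalIntegrable (fun u => u ^ (β - 1) * f (x * u ^ δ)) volume s t := by
  refine (intervalIntegral.intervalIntegrable_rpow' (by linarith)).mul_continuousOn ?_
  have := continuous_rpow_const hδ.le
  fun_prop

lemma bracket {f : ℝ → ℝ} (hf : Continuous f) (hanti : ∀ x y, 0 ≤ x → x ≤ y → f y ≤ f x)
    {β δ : ℝ} (hβ : 0 < β) (hδ : 0 < δ) {t : ℝ} (ht0 : 0 < t) (ht1 : t < 1) {x : ℝ} (hx : 0 ≤ x) :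
    f x * ((1 - t ^ β) / β) ≤ Φ f β δ x - t ^ β * Φ f β δ (x * t ^ δ) ∧
    Φ f β δ x - t ^ β * Φ f β δ (x * t ^ δ) ≤ f (x * t ^ δ) * ((1 - t ^ β) / β) := by
  have h1 := scale_int (f := f) (β := β) (δ := δ) one_pos x
  have h2 := scale_int (f := f) (β := β) (δ := δ) ht0 x
  rw [one_rpow, one_mul, one_rpow, mul_one] at h1
  have h3 : Φ f β δ x - t ^ β * Φ f β δ (x * t ^ δ)
      = ∫ u in t..1, u ^ (β - 1) * f (x * u ^ δ) := by
    rw [← h1, ← h2, intervalIntegral.integral_interval_sub_left] <;> exact rpow_int hf hβ hδ _ _ _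
  have h4 : ∫ u in t..1, u ^ (β - 1) = (1 - t ^ β) / β := by
    rw [integral_rpow (Or.inl (by linarith))]; simp
  rw [h3, ← h4, ← intervalIntegral.integral_const_mul, ← intervalIntegral.integral_const_mul]
  have hi : ∀ C : ℝ, IntervalIntegrable (fun u : ℝ => C * u ^ (β - 1)) volume t 1 := fun C =>
    (intervalIntegral.intervalIntegrable_rpow' (by linarith)).const_mul C
  constructor
  · refine intervalIntegral.integral_mono_on ht1.le (hi _) (rpow_int hf hβ hδ _ _ _) fun u hu => ?_
    have hu0 : 0 ≤ u := ht0.le.trans hu.1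
    rw [mul_comm]
    gcongr
    exact hanti _ _ (by positivity) (mul_le_of_le_one_right hx (rpow_le_one hu0 hu.2 hδ.le))
  · refine intervalIntegral.integral_mono_on ht1.le (rpow_int hf hβ hδ _ _ _) (hi _) fun u hu => ?_
    have hu0 : 0 ≤ u := ht0.le.trans hu.1
    rw [mul_comm (f _)]
    gcongr
    refine hanti _ _ (by positivity) ?_
    gcongr
    exact hu.1

lemma tauber {f : ℝ → ℝ} (hf : Continuous f) (hanti : ∀ x y, 0 ≤ x → x ≤ y → f y ≤ f x)
    {β δ e : ℝ} (hδ : 0 < δ) (hβ : 0 < β)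
    (hlim : Tendsto (fun x => x * Φ f β δ x) atTop (𝓝 e)) :
    Tendsto (fun x => x * f x) atTop (𝓝 (e * (β - δ))) := by
  -- the limits in t
  have hφ : Tendsto (fun t : ℝ => (e - t ^ (β - δ) * e) * (β / (1 - t ^ β))) (𝓝[<] 1)
      (𝓝 (e * (β - δ))) := by
    have := (ratio_lim (g := β - δ) hβ).const_mul (e * β)
    rw [show e * β * ((β - δ) / β) = e * (β - δ) by field_simp] at this
    refine this.congr fun t => by ring
  have hφ' : Tendsto (fun t : ℝ => t ^ δ * ((e - t ^ (β - δ) * e) * (β / (1 - t ^ β)))) (𝓝[<] 1)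
      (𝓝 (e * (β - δ))) := by
    have h1 : Tendsto (fun t : ℝ => t ^ δ) (𝓝[<] 1) (𝓝 1) := by
      have := (continuous_rpow_const hδ.le).tendsto (1:ℝ)
      rw [one_rpow] at this
      exact this.mono_left nhdsWithin_le_nhds
    simpa using h1.mul hφ
  have hpos : ∀ᶠ t : ℝ in 𝓝[<] 1, 0 < t := nhdsWithin_le_nhds (lt_mem_nhds one_pos)
  have hx : ∀ t : ℝ, 0 < t → Tendsto (fun x : ℝ =>
      (x * Φ f β δ x - t ^ (β - δ) * ((x * t ^ δ) * Φ f β δ (x * t ^ δ))) * (β / (1 - t ^ β)))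
      atTop (𝓝 ((e - t ^ (β - δ) * e) * (β / (1 - t ^ β)))) := by
    intro t ht
    have h1 : Tendsto (fun x : ℝ => x * t ^ δ) atTop atTop :=
      tendsto_id.atTop_mul_const (by positivity)
    exact (hlim.sub ((hlim.comp h1).const_mul _)).mul_const _
  have hid : ∀ t x : ℝ, 0 < t →
      (x * Φ f β δ x - t ^ (β - δ) * ((x * t ^ δ) * Φ f β δ (x * t ^ δ))) * (β / (1 - t ^ β))
      = x * (Φ f β δ x - t ^ β * Φ f β δ (x * t ^ δ)) * (β / (1 - t ^ β)) := by
    intro t x ht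
    have : t ^ β = t ^ (β - δ) * t ^ δ := by rw [← rpow_add ht]; simp
    congr 1
    rw [this]; ring
  rw [tendsto_order]
  constructor
  · intro A hA
    obtain ⟨t, h1, ht0, ht1⟩ := ((hφ'.eventually_const_lt hA).and
      (hpos.and self_mem_nhdsWithin)).exists
    replace ht1 : t < 1 := ht1
    have htδ : 0 < t ^ δ := by positivity
    have h2 := ((hx t ht0).const_mul (t ^ δ)).eventually_const_lt h1
    have h3 : Tendsto (fun y : ℝ => y * (t ^ δ)⁻¹) atTop atTop :=
      tendsto_id.atTop_mul_const (by positivity)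
    filter_upwards [h3.eventually h2, eventually_ge_atTop 0] with y hy hy0
    refine hy.trans_le ?_
    set x := y * (t ^ δ)⁻¹ with hxdef
    have hxy : x * t ^ δ = y := by rw [hxdef]; field_simp
    have hx0 : 0 ≤ x := by positivity
    rw [hid t x ht0]
    have hb := (bracket hf hanti hβ hδ ht0 ht1 hx0).2
    have hp : 0 < 1 - t ^ β := sub_pos.2 (rpow_lt_one ht0.le ht1 hβ)
    calc _ ≤ t ^ δ * (x * (f (x * t ^ δ) * ((1 - t ^ β) / β)) * (β / (1 - t ^ β))) := by gcongr
      _ = (x * t ^ δ) * f (x * t ^ δ) := by field_simp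
      _ = y * f y := by rw [hxy]
  · intro A hA
    obtain ⟨t, h1, ht0, ht1⟩ := ((hφ.eventually_lt_const hA).and
      (hpos.and self_mem_nhdsWithin)).exists
    replace ht1 : t < 1 := ht1
    have h2 := (hx t ht0).eventually_lt_const h1
    filter_upwards [h2, eventually_ge_atTop 0] with x hxx hx0
    refine lt_of_le_of_lt ?_ hxx
    rw [hid t x ht0]
    have hb := (bracket hf hanti hβ hδ ht0 ht1 hx0).1
    have hp : 0 < 1 - t ^ β := sub_pos.2 (rpow_lt_one ht0.le ht1 hβ)
    calc x * f x = x * (f x * ((1 - t ^ β) / β)) * (β / (1 - t ^ β)) := by field_simp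
      _ ≤ _ := by gcongr

lemma main {a β δ : ℝ} (ha0 : 0 < a) (ha1 : a < 1) (hδ : 0 < δ) (hβ : δ < β) :
    Tendsto (fun x => x * F (fun n => ∏ k ∈ range n,
      (Gamma (β + k * δ) / Gamma (β + k * δ + a))) x) atTop
      (𝓝 (Gamma (β - δ + a) / Gamma (β - δ))) := by
  have hβ0 : 0 < β := hδ.trans hβ
  have hg : 0 < β - δ := sub_pos.2 hβ
  have hr : 0 < 1 - a := sub_pos.2 ha1
  have G := good_c ha0 ha1 hδ hβ
  set c : ℕ → ℝ := fun n => ∏ k ∈ range n, (Gamma (β + k * δ) / Gamma (β + k * δ + a)) with hc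
  set e : ℝ := Gamma (β - δ + a) / Gamma (β - δ + 1) with he
  have hpa : 0 < β - δ + a := by positivity
  have gr := Gamma_pos_of_pos hr
  set J : ℝ → ℝ := fun x => ∫ u in Ioo (0:ℝ) 1,
    u ^ (β - δ + a - 1) * (1 - u) ^ (1 - a - 1) * F c (x * u ^ δ) with hJ
  have hΦ : ∀ x, HasSum (fun n : ℕ => c n / (β + n * δ) * (-x) ^ n) (Φ (F c) β δ x) := by
    intro x
    have := F_int_hasSum G.ent hβ0 one_pos hδ x
    simp only [sub_self, rpow_zero, mul_one] at this
    convert! this using 1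
    ext n
    have h1 : 0 < β + δ * n := by positivity
    have := Gamma_pos_of_pos h1
    rw [Gamma_add_one h1.ne', Gamma_one, mul_comm (n:ℝ) δ]
    field_simp
  have key : ∀ x, x * Φ (F c) β δ x = e - J x / Gamma (1 - a) := by
    intro x
    have h1 := (F_int_hasSum G.ent hpa hr hδ x).div_const (Gamma (1 - a))
    have h2 := ((hasSum_nat_add_iff' 1).2 h1).neg
    have h3 := (hΦ x).mul_left x
    have h4 := h3.unique (h2.congr_fun ?_)
    · rw [h4]
      simp only [range_one, sum_singleton]
      have : Gamma (β - δ + a + (1 - a)) = Gamma (β - δ + 1) := by ring_nf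
      simp [hc, he, hJ]
      field_simp
    · intro n
      have hs : 0 < β + n * δ := by positivity
      have := Gamma_pos_of_pos hs
      have := Gamma_pos_of_pos (by positivity : 0 < β + n * δ + a)
      have e1 : c (n + 1) = c n * (Gamma (β + n * δ) / Gamma (β + n * δ + a)) := by
        simp only [hc, prod_range_succ]
      have e2 : β - δ + a + δ * ((n + 1 : ℕ) : ℝ) = β + n * δ + a := by push_cast; ring
      rw [e1, e2, show β + n * δ + a + (1 - a) = β + n * δ + 1 by ring, Gamma_add_one hs.ne',
        pow_succ]
      field_simp
  have hJ0 : ∀ x, 0 ≤ x → 0 ≤ J x := fun x hx =>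
    setIntegral_nonneg measurableSet_Ioo fun u hu =>
      mul_nonneg (weight_nonneg hu) (G.nonneg _ (mul_nonneg hx (rpow_nonneg hu.1.le _)))
  have hle : ∀ x, 0 < x → F c x ≤ β * e / x := by
    intro x hx
    have h1 : F c x / β ≤ Φ (F c) β δ x := by
      have h0 := scale_int (f := F c) (β := β) (δ := δ) one_pos x
      rw [one_rpow, one_mul, one_rpow, mul_one] at h0
      have h4 : ∫ u in (0:ℝ)..1, u ^ (β - 1) = 1 / β := by
        rw [integral_rpow (Or.inl (by linarith))]; simp [hβ0.ne']
      rw [← h0, div_eq_mul_one_div, ← h4, ← intervalIntegral.integral_const_mul]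
      refine intervalIntegral.integral_mono_on zero_le_one
        ((intervalIntegral.intervalIntegrable_rpow' (by linarith)).const_mul _)
        (rpow_int G.ent.continuous hβ0 hδ _ _ _) fun u hu => ?_
      have hu0 := hu.1
      rw [mul_comm]
      gcongr
      exact G.anti _ _ (by positivity) (mul_le_of_le_one_right hx.le (rpow_le_one hu0 hu.2 hδ.le))
    have h2 : x * Φ (F c) β δ x ≤ e := by
      rw [key]; have := div_nonneg (hJ0 x hx.le) gr.le; linarith
    rw [le_div_iff₀ hx]
    rw [div_le_iff₀ hβ0] at h1
    nlinarith
  have hF0 : Tendsto (F c) atTop (𝓝 0) := by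
    refine squeeze_zero' ?_ ?_ (tendsto_const_nhds.div_atTop tendsto_id (a := β * e))
    · filter_upwards [eventually_ge_atTop 0] with x hx using G.nonneg x hx
    · filter_upwards [eventually_gt_atTop 0] with x hx using hle x hx
  have hJlim : Tendsto J atTop (𝓝 (∫ u in Ioo (0:ℝ) 1, (0:ℝ))) := by
    refine tendsto_integral_filter_of_dominated_convergence
      (fun u => u ^ (β - δ + a - 1) * (1 - u) ^ (1 - a - 1) * F c 0) ?_ ?_
      ((beta_integrable hpa hr).mul_const _) ?_
    · exact Eventually.of_forall fun x => (F_int G.ent hpa hr hδ x).1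
    · filter_upwards [eventually_ge_atTop 0] with x hx
      refine (ae_restrict_mem measurableSet_Ioo).mono fun u hu => ?_
      have hxu := mul_nonneg hx (rpow_nonneg hu.1.le δ)
      rw [norm_mul, Real.norm_of_nonneg (weight_nonneg hu), Real.norm_of_nonneg (G.nonneg _ hxu)]
      exact mul_le_mul_of_nonneg_left (G.anti _ _ le_rfl hxu) (weight_nonneg hu)
    · refine (ae_restrict_mem measurableSet_Ioo).mono fun u hu => ?_
      have h1 : Tendsto (fun x : ℝ => x * u ^ δ) atTop atTop :=
        tendsto_id.atTop_mul_const (rpow_pos_of_pos hu.1 _)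
      simpa using (hF0.comp h1).const_mul (u ^ (β - δ + a - 1) * (1 - u) ^ (1 - a - 1))
  rw [integral_zero] at hJlim
  have hfin : Tendsto (fun x => x * Φ (F c) β δ x) atTop (𝓝 e) := by
    simp_rw [key]
    simpa using (hJlim.div_const (Gamma (1 - a))).const_sub e
  have := tauber G.ent.continuous G.anti hδ hβ0 hfin
  convert! this using 2
  rw [he, Gamma_add_one hg.ne']
  have := Gamma_pos_of_pos hg
  field_simp

end KS

theorem kilbasSaigo_asymptotics (a m l : ℝ) (ha0 : 0 < a) (ha1 : a < 1)
    (hm : 0 < m) (hl : m - 1 / a < l) :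
    Filter.Tendsto
      (fun x : ℝ => x * ∑' n : ℕ, (∏ k ∈ Finset.range n,
        Real.Gamma (1 + a * (k * m + l)) /
          Real.Gamma (1 + a * (k * m + l + 1))) * (-x) ^ n)
      Filter.atTop
      (nhds (Real.Gamma (1 + a * (l + 1 - m)) / Real.Gamma (1 + a * (l - m)))) := by
  have hδ : a * m < 1 + a * l := by
    have := mul_lt_mul_of_pos_left hl ha0
    rw [mul_sub, mul_one_div_cancel ha0.ne'] at this
    linarith
  have h := KS.main (β := 1 + a * l) (δ := a * m) ha0 ha1 (by positivity) hδ
  rw [show 1 + a * (l + 1 - m) = 1 + a * l - a * m + a by ring,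
    show 1 + a * (l - m) = 1 + a * l - a * m by ring]
  refine h.congr fun x => ?_
  unfold KS.F
  congr 1
  refine tsum_congr fun n => ?_
  congr 1
  refine prod_congr rfl fun k _ => ?_
  congr 2 <;> ring
end
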